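/- arXiv:2312.17147 — 5 statements merged into one kernel-verified Lean document; each statement's English description precedes it below -/
import Mathlib

section
/- Let s₁, s₂ ∈ ℝ be such that the denominator D(ρ) := (s₁s₂ − ρ²·cos ρ)² + ρ²·(s₁ − ρ·sin ρ)² is strictly positive for every ρ ∈ ℝ. Then the function ρ ↦ 1 / ((s₁s₂ − ρ²·cos ρ)² + ρ²·(s₁ − ρ·sin ρ)²) is integrable on ℝ (so the integral f(s₁,s₂) = ∫_ℝ dρ / ((s₁s₂ − ρ²·cos ρ)² + ρ²·(s₁ − ρ·sin ρ)²) is finite). -/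
/-!
The integrand is continuous because the denominator never vanishes, hence it is locally integrable.
At infinity `cos² + sin² = 1` makes `ρ⁴` the dominant term of the denominator, so the integrand
is eventually at most `(1 + ρ²)⁻¹`, which is integrable.
-/

open MeasureTheory Real

/-- Applying `(x - y)² ≥ y² / 2 - x²` to both squares bounds the denominator below by
`ρ⁴ / 2 - (s₁s₂)² - ρ²s₁²`, which exceeds `1 + ρ²` for large `ρ`. -/
theorem one_add_sq_le_denominator (s₁ s₂ ρ : ℝ)
    (h : 4 * (1 + (s₁ * s₂) ^ 2 + s₁ ^ 2) ≤ ρ ^ 2) :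
    1 + ρ ^ 2 ≤
      (s₁ * s₂ - ρ ^ 2 * Real.cos ρ) ^ 2 + ρ ^ 2 * (s₁ - ρ * Real.sin ρ) ^ 2 := by
  have half (x y : ℝ) : y ^ 2 / 2 - x ^ 2 ≤ (x - y) ^ 2 := by
    nlinarith [sq_nonneg (2 * x - y)]
  have hc := half (s₁ * s₂) (ρ ^ 2 * Real.cos ρ)
  have hs := mul_le_mul_of_nonneg_left (half s₁ (ρ * Real.sin ρ)) (sq_nonneg ρ)
  have trig : (ρ ^ 2 * Real.cos ρ) ^ 2 + ρ ^ 2 * (ρ * Real.sin ρ) ^ 2 = (ρ ^ 2) ^ 2 := by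
    linear_combination (ρ ^ 2) ^ 2 * Real.sin_sq_add_cos_sq ρ
  have ha := sq_nonneg (s₁ * s₂)
  have hb := sq_nonneg s₁
  generalize s₁ * s₂ = a at *
  have h1 : 1 ≤ ρ ^ 2 := by linarith
  have h2 := mul_le_mul_of_nonneg_right h (sq_nonneg ρ)
  have h3 := mul_le_mul_of_nonneg_left h1 ha
  have h4 := mul_nonneg hb (sq_nonneg ρ)
  linarith

/-- If the denominator `(s₁s₂ − ρ²cos ρ)² + ρ²(s₁ − ρ sin ρ)²` is strictly positive for
every `ρ`, then `ρ ↦ 1 / ((s₁s₂ − ρ²cos ρ)² + ρ²(s₁ − ρ sin ρ)²)` is Lebesgue-integrable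
on `ℝ`, i.e. the modal variance integral `f(s₁,s₂)` is finite. -/
theorem integrable_modal_variance (s₁ s₂ : ℝ)
    (hpos : ∀ ρ : ℝ,
      0 < (s₁ * s₂ - ρ ^ 2 * Real.cos ρ) ^ 2 + ρ ^ 2 * (s₁ - ρ * Real.sin ρ) ^ 2) :
    Integrable (fun ρ : ℝ =>
      1 / ((s₁ * s₂ - ρ ^ 2 * Real.cos ρ) ^ 2 + ρ ^ 2 * (s₁ - ρ * Real.sin ρ) ^ 2)) := by
  have hcont : Continuous (fun ρ : ℝ =>
      1 / ((s₁ * s₂ - ρ ^ 2 * Real.cos ρ) ^ 2 + ρ ^ 2 * (s₁ - ρ * Real.sin ρ) ^ 2)) :=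
    continuous_const.div (by fun_prop) fun ρ => (hpos ρ).ne'
  refine hcont.locallyIntegrable.integrable_of_isBigO_cocompact (g := fun ρ : ℝ => (1 + ρ ^ 2)⁻¹)
    (Asymptotics.IsBigO.of_bound 1 ?_) (integrable_inv_one_add_sq.integrableAtFilter _)
  have hlarge : ∀ᶠ ρ : ℝ in Filter.cocompact ℝ,
      4 * (1 + (s₁ * s₂) ^ 2 + s₁ ^ 2) ≤ ‖ρ‖ ^ 2 :=
    ((Filter.tendsto_pow_atTop two_ne_zero).comp
      (tendsto_norm_cocompact_atTop (E := ℝ))).eventually_ge_atTop _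
  filter_upwards [hlarge] with ρ hρ
  rw [Real.norm_eq_abs, sq_abs] at hρ
  rw [one_mul, Real.norm_of_nonneg (one_div_nonneg.2 (hpos ρ).le),
    Real.norm_of_nonneg (by positivity), one_div]
  exact inv_anti₀ (by positivity) (one_add_sq_le_denominator s₁ s₂ ρ hρ)
end

section
/- Let μ̃ ∈ ℝ, σ̃ > 0, ε ∈ (0,1), r > 0, and c ≥ 1. Let ν = N(μ̃, σ̃²) be the Gaussian measure with mean μ̃ and variance σ̃², set R := inf { z ∈ ℝ : ν((-∞, z)) > ε }, 𝔄 := ε^{−1} ∫_{x < R} x dν(x), and κ := (√(2π)·ε)^{−1} · exp(−(R − μ̃)² / (2σ̃²)). Then: (a) 𝔄 = μ̃ − κ·σ̃; (b) if (c·μ̃ − r)/(c·σ̃) ≥ κ then the set { δ ≥ 0 : 𝔄 < r/(δ + c) } is empty; (c) if (c·μ̃ − r)/(c·σ̃) < κ < μ̃/σ̃ then sup { δ ≥ 0 : 𝔄 < r/(δ + c) } = r/(μ̃ − κ·σ̃) − c; (d) if μ̃/σ̃ ≤ κ then every δ ≥ 0 satisfies 𝔄 < r/(δ + c). -/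
/-!
The atomless law `ν = N(μ, v)` has a continuous distribution function, so the infimum defining
the Value-at-Risk `R` satisfies `ν (-∞, R) = ε` exactly (`measureReal_Iio_sInf`). On the other hand
the Gaussian density `p` solves `(-v p)' = (x - μ) p`, which integrates to
`∫_{x < R} x dν = μ ν (-∞, R) - v p(R)` (`setIntegral_Iio_gaussianReal`). Dividing by `ε` and
identifying `v p(R) / ε` with `κ σ` gives `𝔄 = μ - κ σ`.

The three branches are then the elementary analysis of `𝔄 < r / (δ + c)` according to whether
`𝔄 ≥ r / c`, `0 < 𝔄 < r / c` or `𝔄 ≤ 0`; in the middle case the set of admissible `δ` is the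
nonempty interval `[0, r / 𝔄 - c)`.
-/

open MeasureTheory ProbabilityTheory Real

/-- For an atomless probability measure on the line, the strict upper `ε`-quantile cuts off a left
tail of mass exactly `ε`. -/
lemma measureReal_Iio_sInf (ν : Measure ℝ) [IsProbabilityMeasure ν] [NullSingletonClass ν]
    {ε : ℝ} (hε : ε ∈ Set.Ioo (0 : ℝ) 1) :
    ν.real (Set.Iio (sInf {z : ℝ | ε < (ν (Set.Iio z)).toReal})) = ε := by
  have hF : ∀ z, (ν (Set.Iio z)).toReal = cdf ν z := fun z => by
    rw [cdf_eq_real, measureReal_def, measure_congr Iio_ae_eq_Iic]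
  simp only [hF]
  set S : Set ℝ := {z : ℝ | ε < cdf ν z} with hS
  rw [measureReal_def, hF]
  have hne : S.Nonempty := ((tendsto_cdf_atTop ν).eventually_const_lt hε.2).exists
  have hbdd : BddBelow S := by
    obtain ⟨b, hb⟩ := ((tendsto_cdf_atBot ν).eventually_lt_const hε.1).exists
    refine ⟨b, fun z hz => ?_⟩
    by_contra! h
    exact absurd (monotone_cdf ν h.le) (by have : ε < cdf ν z := hz; linarith)
  set R := sInf S
  -- The absence of an atom at `R` makes the left limit of the distribution function its value.
  have hleft : Function.leftLim (cdf ν) R = cdf ν R := by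
    have h := (cdf ν).measure_singleton R
    rw [measure_cdf, measure_singleton] at h
    have h1 := ENNReal.ofReal_eq_zero.1 h.symm
    have h2 := (monotone_cdf ν).leftLim_le (le_refl R)
    linarith
  apply le_antisymm
  · have ht := (monotone_cdf ν).tendsto_leftLim R
    rw [hleft] at ht
    refine le_of_tendsto ht ?_
    filter_upwards [self_mem_nhdsWithin] with z hz
    exact not_lt.1 fun h => not_lt.2 (csInf_le hbdd h) hz
  · have ht : Filter.Tendsto (cdf ν) (nhdsWithin R (Set.Ioi R)) (nhds (cdf ν R)) :=
      ((cdf ν).right_continuous R).mono_left (nhdsWithin_mono _ Set.Ioi_subset_Ici_self)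
    refine ge_of_tendsto ht ?_
    filter_upwards [self_mem_nhdsWithin] with z hz
    obtain ⟨w, hw, hwz⟩ := exists_lt_of_csInf_lt hne hz
    exact le_of_lt (lt_of_lt_of_le hw (monotone_cdf ν hwz.le))

lemma hasDerivAt_neg_mul_gaussianPDFReal (μ : ℝ) {v : NNReal} (hv : v ≠ 0) (x : ℝ) :
    HasDerivAt (fun x => -(v : ℝ) * gaussianPDFReal μ v x)
      ((x - μ) * gaussianPDFReal μ v x) x := by
  have hv' : (v : ℝ) ≠ 0 := by exact_mod_cast hv
  have h : HasDerivAt (fun x : ℝ => -(x - μ) ^ 2 / (2 * v)) (-(x - μ) / v) x := by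
    have := ((((hasDerivAt_id x).sub_const μ).pow 2).neg).div_const (2 * (v : ℝ))
    convert! this using 1
    simp
    field_simp
    ring
  have h2 := (h.exp.const_mul (√(2 * π * v))⁻¹).const_mul (-(v : ℝ))
  convert! h2 using 1
  simp only [gaussianPDFReal]
  field_simp

/-- Truncated first moment of a Gaussian. -/
lemma setIntegral_Iio_gaussianReal (μ : ℝ) {v : NNReal} (hv : v ≠ 0) (R : ℝ) :
    ∫ x in Set.Iio R, x ∂(gaussianReal μ v) =
      μ * (gaussianReal μ v).real (Set.Iio R) - v * gaussianPDFReal μ v R := by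
  have hp : Integrable (gaussianPDFReal μ v) := integrable_gaussianPDFReal μ v
  have hxp : Integrable (fun x => gaussianPDFReal μ v x * x) := by
    have h : Integrable (fun x : ℝ => x) (gaussianReal μ v) :=
      (memLp_id_gaussianReal (μ := μ) (v := v) 1).integrable (by simp)
    rw [gaussianReal_of_var_ne_zero _ hv, integrable_withDensity_iff_integrable_smul'
      (measurable_gaussianPDF _ _) (ae_of_all _ fun _ => gaussianPDF_lt_top)] at h
    simpa using h
  have hd : Integrable (fun x => (x - μ) * gaussianPDFReal μ v x) := by
    refine (hxp.sub (hp.const_mul μ)).congr (ae_of_all _ fun x => ?_)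
    simp only [Pi.sub_apply]
    ring
  have hder := hasDerivAt_neg_mul_gaussianPDFReal μ hv
  have hlim := tendsto_zero_of_hasDerivAt_of_integrableOn_Iic (a := R) (fun x _ => hder x)
    hd.integrableOn (hp.const_mul _).integrableOn
  have hint := integral_Iic_of_hasDerivAt_of_tendsto' (a := R) (fun x _ => hder x)
    hd.integrableOn hlim
  have hmass : (gaussianReal μ v).real (Set.Iio R) = ∫ x in Set.Iic R, gaussianPDFReal μ v x := by
    rw [measureReal_def, gaussianReal_apply_eq_integral _ hv, integral_Iic_eq_integral_Iio,
      ENNReal.toReal_ofReal (integral_nonneg (gaussianPDFReal_nonneg _ _))]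
  have hmom : ∫ x in Set.Iio R, x ∂(gaussianReal μ v) =
      ∫ x in Set.Iic R, gaussianPDFReal μ v x * x := by
    rw [gaussianReal_of_var_ne_zero _ hv, setIntegral_withDensity_eq_setIntegral_toReal_smul
      (measurable_gaussianPDF _ _) (ae_of_all _ fun _ => gaussianPDF_lt_top) _ measurableSet_Iio,
      integral_Iic_eq_integral_Iio]
    simp
  have hsplit : ∫ x in Set.Iic R, (x - μ) * gaussianPDFReal μ v x =
      (∫ x in Set.Iic R, gaussianPDFReal μ v x * x) -
        μ * ∫ x in Set.Iic R, gaussianPDFReal μ v x := by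
    rw [← integral_const_mul, ← integral_sub hxp.integrableOn (hp.const_mul μ).integrableOn]
    congr 1 with x
    ring
  rw [hmass, hmom]
  linarith

/-- Risk of cascading collision for a conditional Gaussian distance `N(μ̃, σ̃²)`:
with `R` the Value-at-Risk at level `ε`, `𝔄 = ε⁻¹ ∫_{x<R} x dν` the Average
Value-at-Risk and `κ = (√(2π)ε)⁻¹ exp(−(R−μ̃)²/(2σ̃²))`, one has `𝔄 = μ̃ − κσ̃`, and the
risk `sup {δ ≥ 0 : 𝔄 < r/(δ+c)}` obeys the three-branch formula. -/
theorem avar_cascading_collision_risk (μt σt ε r c : ℝ)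
    (hσ : 0 < σt) (hε : ε ∈ Set.Ioo (0 : ℝ) 1) (hr : 0 < r) (hc : 1 ≤ c)
    (ν : Measure ℝ) (hν : ν = gaussianReal μt (Real.toNNReal (σt ^ 2)))
    (R : ℝ) (hR : R = sInf {z : ℝ | ε < (ν (Set.Iio z)).toReal})
    (A : ℝ) (hA : A = ε⁻¹ * ∫ x in Set.Iio R, x ∂ν)
    (κ : ℝ) (hκ : κ = (Real.sqrt (2 * Real.pi) * ε)⁻¹ *
      Real.exp (-(R - μt) ^ 2 / (2 * σt ^ 2))) :
    A = μt - κ * σt ∧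
    (κ ≤ (c * μt - r) / (c * σt) → {δ : ℝ | 0 ≤ δ ∧ A < r / (δ + c)} = ∅) ∧
    ((c * μt - r) / (c * σt) < κ → κ < μt / σt →
      sSup {δ : ℝ | 0 ≤ δ ∧ A < r / (δ + c)} = r / (μt - κ * σt) - c) ∧
    (μt / σt ≤ κ → ∀ δ : ℝ, 0 ≤ δ → A < r / (δ + c)) := by
  have hv : Real.toNNReal (σt ^ 2) ≠ 0 := by
    rw [Ne, Real.toNNReal_eq_zero, not_le]
    positivity
  have hε0 : 0 < ε := hε.1
  have hc0 : 0 < c := by linarith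
  have hAeq : A = μt - κ * σt := by
    have hvr : ((Real.toNNReal (σt ^ 2) : NNReal) : ℝ) = σt ^ 2 :=
      Real.coe_toNNReal _ (by positivity)
    have hmass : (gaussianReal μt (Real.toNNReal (σt ^ 2))).real (Set.Iio R) = ε := by
      have := nullSingletonClass_gaussianReal (μ := μt) hv
      rw [hR, hν]
      exact measureReal_Iio_sInf _ hε
    have hsqrt : √(2 * π * σt ^ 2) = √(2 * π) * σt := by
      rw [Real.sqrt_mul (by positivity), Real.sqrt_sq hσ.le]
    have hpi : √(2 * π) ≠ 0 := by positivity
    rw [hA, hκ, hν, setIntegral_Iio_gaussianReal μt hv, hmass, gaussianPDFReal, hvr, hsqrt]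
    field_simp
  refine ⟨hAeq, fun h => ?_, fun h1 h2 => ?_, fun h δ hδ => ?_⟩
  · have hrA : r / c ≤ A := by
      rw [le_div_iff₀ (by positivity)] at h
      rw [div_le_iff₀ hc0, hAeq]
      linarith
    rw [Set.eq_empty_iff_forall_notMem]
    rintro δ ⟨hδ, hlt⟩
    have : r / (δ + c) ≤ r / c := div_le_div_of_nonneg_left hr.le hc0 (by linarith)
    linarith
  · have hA0 : 0 < A := by
      rw [lt_div_iff₀ hσ] at h2
      linarith
    have hcA : c < r / A := by
      rw [div_lt_iff₀ (by positivity)] at h1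
      rw [lt_div_iff₀ hA0, hAeq]
      linarith
    have hset : {δ : ℝ | 0 ≤ δ ∧ A < r / (δ + c)} = Set.Ico 0 (r / A - c) := by
      ext δ
      refine and_congr_right fun hδ => ?_
      rw [lt_div_comm₀ hA0 (by linarith), lt_sub_iff_add_lt]
    rw [hset, csSup_Ico (by linarith), hAeq]
  · rw [div_le_iff₀ hσ] at h
    have : 0 < r / (δ + c) := by positivity
    linarith
end

section
/- Let n ≥ 2 and let Q be an n×n real orthogonal matrix whose first column q₁ equals (1/√n)·(1, …, 1)ᵀ, with columns q₁, …, qₙ. Let f₂, …, fₙ ∈ ℝ with f̲ ≤ fₖ ≤ f̄ for all k = 2, …, n (where f̲ ≤ f̄). For 1 ≤ i ≤ n−1 let ẽᵢ := e_{i+1} − eᵢ ∈ ℝⁿ and define sᵢⱼ := Σ_{k=2}^{n} (ẽᵢᵀ qₖ)(ẽⱼᵀ qₖ)·fₖ. Then for all 1 ≤ i, j ≤ n−1: (i) if i = j then 2f̲ ≤ sᵢⱼ ≤ 2f̄; (ii) if |i − j| = 1 then (1/2)f̲ − (3/2)f̄ ≤ sᵢⱼ ≤ (1/2)f̄ − (3/2)f̲;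 (iii) if |i − j| > 1 then f̲ − f̄ ≤ sᵢⱼ ≤ f̄ − f̲. -/
open Finset Real

/-!
Put `u k = ẽᵢᵀqₖ` and `v k = ẽⱼᵀqₖ`. By polarization `u v = ((u + v)² - (u - v)²) / 4`, so bounding
the weights by `f̲` and `f̄` separately in the two squares gives
`f̲ A - f̄ B ≤ sᵢⱼ ≤ f̄ A - f̲ B` with `A = ‖u + v‖² / 4` and `B = ‖u - v‖² / 4`
(`weighted_inner_bounds`). Since `q₁` is constant, `u` and `v` vanish at the first index, so
dropping that index does not change the inner products; by orthonormality of the rows of `Q`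
(`sum_diff_mul_diff`) these are `‖u‖² = ‖v‖² = 2` and `⟨u, v⟩ = ẽᵢᵀẽⱼ`, which is `2`, `-1` or `0`
according as `|i - j|` is `0`, `1` or larger. Hence `(A, B)` is `(2, 0)`, `(1/2, 3/2)` or `(1, 1)`.
-/

/-- Polarization bound for a weighted inner product with weights in `[fl, fu]`; the sums `∑ u²`,
`∑ v²` and `∑ u v` enter as the numbers `a`, `b` and `c`. -/
lemma weighted_inner_bounds {ι : Type*} (t : Finset ι) (u v f : ι → ℝ) (fl fu a b c : ℝ)
    (hf : ∀ k ∈ t, fl ≤ f k ∧ f k ≤ fu)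
    (hu : ∑ k ∈ t, u k * u k = a) (hv : ∑ k ∈ t, v k * v k = b)
    (huv : ∑ k ∈ t, u k * v k = c) :
    fl * ((a + b + 2 * c) / 4) - fu * ((a + b - 2 * c) / 4) ≤ ∑ k ∈ t, u k * v k * f k ∧
      ∑ k ∈ t, u k * v k * f k ≤
        fu * ((a + b + 2 * c) / 4) - fl * ((a + b - 2 * c) / 4) := by
  have split : ∀ x y : ℝ, x * ((a + b + 2 * c) / 4) - y * ((a + b - 2 * c) / 4) =
      ∑ k ∈ t, (x * ((u k + v k) ^ 2 / 4) - y * ((u k - v k) ^ 2 / 4)) := by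
    intro x y
    have key : ∀ k, x * ((u k + v k) ^ 2 / 4) - y * ((u k - v k) ^ 2 / 4) =
        (x - y) / 4 * (u k * u k) + (x - y) / 4 * (v k * v k)
          + (x + y) / 2 * (u k * v k) := fun k => by ring
    simp only [key, Finset.sum_add_distrib, ← Finset.mul_sum, hu, hv, huv]
    ring
  rw [split, split]
  constructor <;> refine Finset.sum_le_sum fun k hk => ?_ <;> obtain ⟨h1, h2⟩ := hf k hk
  · nlinarith [mul_le_mul_of_nonneg_right h1 (sq_nonneg (u k + v k)),
      mul_le_mul_of_nonneg_right h2 (sq_nonneg (u k - v k))]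
  · nlinarith [mul_le_mul_of_nonneg_right h2 (sq_nonneg (u k + v k)),
      mul_le_mul_of_nonneg_right h1 (sq_nonneg (u k - v k))]

/-- Inner products of row differences of a matrix with orthonormal rows. The index `z` may be
dropped from the sum because the column `z` takes the same value in the rows `a` and `b`. -/
lemma sum_diff_mul_diff {m : Type*} [Fintype m] [DecidableEq m] (Q : Matrix m m ℝ)
    (hQ : Q * Q.transpose = 1) (z a b c d : m) (hz : Q a z = Q b z) :
    ∑ k ∈ Finset.univ.erase z, (Q a k - Q b k) * (Q c k - Q d k) =
      (if a = c then 1 else 0) - (if a = d then 1 else 0) - (if b = c then 1 else 0)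
        + (if b = d then 1 else 0) := by
  have gram : ∀ x y : m, ∑ k, Q x k * Q y k = if x = y then 1 else 0 := by
    intro x y
    have h := congrFun (congrFun hQ x) y
    simpa [Matrix.mul_apply, Matrix.one_apply] using h
  rw [Finset.sum_erase _ (by simp [hz])]
  have key : ∀ k, (Q a k - Q b k) * (Q c k - Q d k) =
      Q a k * Q c k - Q a k * Q d k - Q b k * Q c k + Q b k * Q d k := fun k => by ring
  simp only [key, Finset.sum_add_distrib, Finset.sum_sub_distrib, gram]

/-- Fundamental limits on the steady-state covariance entries: for an orthogonal `Q`
with first column `(1/√n)·𝟙` and modal weights `fₖ ∈ [f̲, f̄]` (`k = 2,…,n`), the sums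
`sᵢⱼ = Σ_{k=2}^n (ẽᵢᵀqₖ)(ẽⱼᵀqₖ)fₖ` satisfy `2f̲ ≤ sᵢᵢ ≤ 2f̄`,
`f̲/2 − 3f̄/2 ≤ sᵢⱼ ≤ f̄/2 − 3f̲/2` for `|i−j| = 1`, and `f̲ − f̄ ≤ sᵢⱼ ≤ f̄ − f̲` for
`|i−j| > 1`. (Pair indices are `0`-based: pair `i` consists of rows `i`, `i+1`.) -/
theorem covariance_fundamental_limits (n : ℕ) (hn : 2 ≤ n)
    (Q : Matrix (Fin n) (Fin n) ℝ)
    (hQ : Q.transpose * Q = 1 ∧ Q * Q.transpose = 1)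
    (hq1 : ∀ l : Fin n, Q l ⟨0, by omega⟩ = 1 / Real.sqrt n)
    (f : Fin n → ℝ) (fl fu : ℝ) (hflu : fl ≤ fu)
    (hf : ∀ k : Fin n, k ≠ ⟨0, by omega⟩ → fl ≤ f k ∧ f k ≤ fu)
    (i j : Fin n) (hi : (i : ℕ) + 1 < n) (hj : (j : ℕ) + 1 < n)
    (s : ℝ)
    (hs : s = ∑ k ∈ Finset.univ.erase (⟨0, by omega⟩ : Fin n),
      (Q ⟨(i : ℕ) + 1, hi⟩ k - Q i k) * (Q ⟨(j : ℕ) + 1, hj⟩ k - Q j k) * f k) :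
    (i = j → 2 * fl ≤ s ∧ s ≤ 2 * fu) ∧
    (((i : ℕ) + 1 = j ∨ (j : ℕ) + 1 = i) →
      (1 / 2) * fl - (3 / 2) * fu ≤ s ∧ s ≤ (1 / 2) * fu - (3 / 2) * fl) ∧
    ((1 < (i : ℕ) - (j : ℕ) ∨ 1 < (j : ℕ) - (i : ℕ)) →
      fl - fu ≤ s ∧ s ≤ fu - fl) := by
  have const : ∀ x y : Fin n, Q x ⟨0, by omega⟩ = Q y ⟨0, by omega⟩ := fun x y => by
    rw [hq1, hq1]
  have diag : ∀ (l : Fin n) (hl : (l : ℕ) + 1 < n),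
      ∑ k ∈ Finset.univ.erase (⟨0, by omega⟩ : Fin n),
        (Q ⟨(l : ℕ) + 1, hl⟩ k - Q l k) * (Q ⟨(l : ℕ) + 1, hl⟩ k - Q l k) = 2 := by
    intro l hl
    rw [sum_diff_mul_diff Q hQ.2 _ _ _ _ _ (const _ _)]
    simp only [Fin.ext_iff]
    norm_num
  have cross := sum_diff_mul_diff Q hQ.2 ⟨0, by omega⟩ ⟨(i : ℕ) + 1, hi⟩ i
    ⟨(j : ℕ) + 1, hj⟩ j (const _ _)
  have bounds := weighted_inner_bounds (Finset.univ.erase (⟨0, by omega⟩ : Fin n))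
    (fun k => Q ⟨(i : ℕ) + 1, hi⟩ k - Q i k) (fun k => Q ⟨(j : ℕ) + 1, hj⟩ k - Q j k) f fl fu
    2 2 _ (fun k hk => hf k (Finset.ne_of_mem_erase hk)) (diag i hi) (diag j hj) cross
  rw [← hs] at bounds
  simp only [Fin.ext_iff] at bounds ⊢
  obtain ⟨lower, upper⟩ := bounds
  refine ⟨fun h => ?_, fun h => ?_, fun h => ?_⟩
  · rw [if_pos (by omega), if_neg (by omega), if_neg (by omega), if_pos (by omega)]
      at lower upper
    constructor <;> linarith
  · rcases h with h | h
    · rw [if_neg (by omega), if_pos (by omega), if_neg (by omega), if_neg (by omega)]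
        at lower upper
      constructor <;> linarith
    · rw [if_neg (by omega), if_neg (by omega), if_pos (by omega), if_neg (by omega)]
        at lower upper
      constructor <;> linarith
  · rw [if_neg (by omega), if_neg (by omega), if_neg (by omega), if_neg (by omega)]
      at lower upper
    constructor <;> linarith
end

section
/- For m ≥ 1, let T_m be the m×m real symmetric tridiagonal matrix with (T_m)_{ii} = 1 for all i, (T_m)_{i,i+1} = (T_m)_{i+1,i} = −1/2 for 1 ≤ i ≤ m−1, and all other entries 0. Then: (i) e₁ᵀ T_m^{-1} e₁ = 2m/(m + 1) (the (1,1) entry of the inverse), and (ii) Σ_{l=1}^{m} (T_m^{-1})_{1l} = m (the sum of the first row of the inverse). Consequently, for any σ_c > 0, σ_c − (σ_c/2)² · (1/σ_c) · (e₁ᵀ T_m^{-1} e₁) = σ_c·(m + 2)/(2(m + 1)). -/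
open Matrix Finset

/-!
`T_m` is half the discrete Dirichlet Laplacian on `{1, …, m}`, so its inverse is twice the
Green's function of that Laplacian: the `j`-th column is the function `g` that is linear on
`[0, j]` and on `[j, m + 1]`, vanishes at `0` and `m + 1`, and has slope jump `-2` at `j`.
`sum_secondDiff` says that `T_m` acts on a function vanishing at `0` and `m + 1` as minus half
the second difference; this makes the Green's function a right inverse of `T_m`. Its first row,
`2 (m - l) / (m + 1)` for `l = 0, …, m - 1`, gives the entry and the sum claimed.
-/

/-- The Green's function of minus half the second difference on `{0, …, m + 1}` with Dirichlet
boundary conditions. The first argument is a point `t ∈ {0, …, m + 1}`; the pole is at `j + 1`,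
so that `j` is the zero-based index of a column. -/
noncomputable def dirichletGreen (m j t : ℕ) : ℝ :=
  if t ≤ j + 1 then 2 * (t : ℝ) * ((m : ℝ) - j) / ((m : ℝ) + 1)
  else 2 * ((j : ℝ) + 1) * ((m : ℝ) + 1 - t) / ((m : ℝ) + 1)

/-- On functions vanishing at `0` and `m + 1`, the tridiagonal matrix acts as minus half the
second difference. The boundary values absorb the missing neighbours in the first and last row. -/
lemma sum_secondDiff (m : ℕ) (g : ℕ → ℝ) (h0 : g 0 = 0) (hm : g (m + 1) = 0) (i : Fin m) :
    (∑ k : Fin m, (if i = k then (1 : ℝ)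
      else if (i : ℕ) + 1 = k ∨ (k : ℕ) + 1 = i then -(1 / 2) else 0) * g (k + 1)) =
      g (i + 1) - (g i + g (i + 2)) / 2 := by
  obtain ⟨i, hi⟩ := i
  have key : ∀ k : Fin m, (if (⟨i, hi⟩ : Fin m) = k then (1 : ℝ)
      else if i + 1 = (k : ℕ) ∨ (k : ℕ) + 1 = i then -(1 / 2) else 0) * g (k + 1) =
      (fun k : ℕ => (if k = i then g (i + 1) else 0) - (if k = i + 1 then g (i + 2) / 2 else 0)
        - (if k + 1 = i then g i / 2 else 0)) k := by
    rintro ⟨k, hk⟩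
    simp only [Fin.mk.injEq]
    by_cases h1 : k = i
    · subst h1; simp
    by_cases h2 : k = i + 1
    · have h4 : ¬ i + 1 + 1 = i := by omega
      subst h2; simp [h4]; ring
    by_cases h3 : k + 1 = i
    · have h4 : ¬ k = k + 1 + 1 := by omega
      subst h3; simp [h4]; ring
    · have h1' : ¬ i = k := fun h => h1 h.symm
      have h2' : ¬ i + 1 = k := fun h => h2 h.symm
      simp [h1, h1', h2, h2', h3]
  simp only [key]
  rw [Fin.sum_univ_eq_sum_range (fun k : ℕ => (if k = i then g (i + 1) else 0)
    - (if k = i + 1 then g (i + 2) / 2 else 0) - (if k + 1 = i then g i / 2 else 0)) m,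
    sum_sub_distrib, sum_sub_distrib, sum_ite_eq', sum_ite_eq', if_pos (mem_range.2 hi)]
  have hR : (if i + 1 ∈ range m then g (i + 2) / 2 else 0) = g (i + 2) / 2 := by
    split_ifs with h
    · rfl
    · have : i + 2 = m + 1 := by simp at h; omega
      rw [this, hm]; simp
  have hL : (∑ k ∈ range m, if k + 1 = i then g i / 2 else 0) = g i / 2 := by
    cases i with
    | zero => simp [h0]
    | succ n =>
      have hn : n < m := by omega
      simp [hn]
  rw [hR, hL]; ring

lemma dirichletGreen_secondDiff (m j i : ℕ) :
    dirichletGreen m j (i + 1) - (dirichletGreen m j i + dirichletGreen m j (i + 2)) / 2 =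
      if i = j then 1 else 0 := by
  have hm : (m : ℝ) + 1 ≠ 0 := by positivity
  unfold dirichletGreen
  rcases lt_trichotomy i j with h | h | h
  · rw [if_pos (by omega), if_pos (by omega), if_pos (by omega), if_neg (by omega)]
    push_cast; ring
  · subst h
    rw [if_pos (by omega), if_pos (by omega), if_neg (by omega), if_pos rfl]
    push_cast; field_simp; ring
  · rw [if_neg (by omega), if_neg (by omega : ¬ i + 2 ≤ j + 1), if_neg (by omega : ¬ i = j)]
    split_ifs with h'
    · have : i = j + 1 := by omega
      subst this
      push_cast; field_simp; ring
    · push_cast; ring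

/-- First row of the inverse of the tridiagonal matrix `T_m` (diagonal `1`,
off-diagonals `−1/2`): `(T_m⁻¹)_{11} = 2m/(m+1)`, the first-row sum of `T_m⁻¹` is `m`,
and consequently `σ_c − (σ_c/2)²·(1/σ_c)·(T_m⁻¹)_{11} = σ_c(m+2)/(2(m+1))` for any
`σ_c > 0`. -/
theorem tridiagonal_inverse_first_row (m : ℕ) (hm : 1 ≤ m)
    (T : Matrix (Fin m) (Fin m) ℝ)
    (hT : T = Matrix.of fun i j : Fin m => if i = j then (1 : ℝ)
      else if (i : ℕ) + 1 = j ∨ (j : ℕ) + 1 = i then -(1 / 2) else 0) :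
    T⁻¹ ⟨0, by omega⟩ ⟨0, by omega⟩ = 2 * (m : ℝ) / ((m : ℝ) + 1) ∧
    (∑ l : Fin m, T⁻¹ ⟨0, by omega⟩ l) = (m : ℝ) ∧
    (∀ σc : ℝ, 0 < σc →
      σc - (σc / 2) ^ 2 * (1 / σc) * (T⁻¹ ⟨0, by omega⟩ ⟨0, by omega⟩) =
        σc * ((m : ℝ) + 2) / (2 * ((m : ℝ) + 1))) := by
  have hm1 : (m : ℝ) + 1 ≠ 0 := by positivity
  have hinv : T⁻¹ = Matrix.of fun i j : Fin m => dirichletGreen m j (i + 1) := by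
    apply Matrix.inv_eq_right_inv
    ext i j
    have hlast : dirichletGreen m j (m + 1) = 0 := by
      have := j.2
      unfold dirichletGreen
      rw [if_neg (by omega)]; simp
    rw [Matrix.mul_apply, hT]
    simp only [Matrix.of_apply]
    rw [sum_secondDiff m (dirichletGreen m j) (by simp [dirichletGreen]) hlast i,
      dirichletGreen_secondDiff, Matrix.one_apply]
    simp [Fin.ext_iff]
  have hrow : ∀ l : Fin m, T⁻¹ ⟨0, by omega⟩ l = 2 * ((m : ℝ) - (l : ℕ)) / ((m : ℝ) + 1) := by
    intro l
    rw [hinv, Matrix.of_apply, dirichletGreen, if_pos (by simp)]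
    simp
  have h00 : T⁻¹ ⟨0, by omega⟩ ⟨0, by omega⟩ = 2 * (m : ℝ) / ((m : ℝ) + 1) := by
    simp [hrow]
  refine ⟨h00, ?_, fun σc hσ => ?_⟩
  · have hsum : ∀ n : ℕ, ∑ l ∈ range n, 2 * ((m : ℝ) - (l : ℝ)) / ((m : ℝ) + 1) =
        n * (2 * m + 1 - n) / ((m : ℝ) + 1) := by
      intro n
      induction n with
      | zero => simp
      | succ n ih => rw [sum_range_succ, ih]; push_cast; ring
    simp only [hrow]
    rw [Fin.sum_univ_eq_sum_range (fun l : ℕ => 2 * ((m : ℝ) - (l : ℝ)) / ((m : ℝ) + 1)) m, hsum]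
    field_simp; ring
  · rw [h00]
    field_simp; ring
end

section
/- Let r > 0 and 0 < a ≤ b, and let κ ≥ r/b. Then for all real σᵢ, σⱼ ∈ [a, b] and all σᵢⱼ with 0 ≤ σᵢⱼ ≤ σᵢσⱼ, the quantity 𝔄(σᵢ, σⱼ, σᵢⱼ) := r − r·σᵢⱼ/σᵢ² − κ·√(σⱼ² − σᵢⱼ²/σᵢ²) satisfies 𝔄(σᵢ, σⱼ, σᵢⱼ) ≤ r·(1 − a/b). -/
/-!
With `t = σij / σi ∈ [0, σj]`, the claim is `r a / b ≤ r t / σi + κ √(σj² - t²)`. Since `σi ≤ b`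
and `r / b ≤ κ`, the right side is at least `(r / b) (t + √(σj² - t²))`, and
`t + √(σj² - t²) ≥ σj ≥ a` because `(σj - t)² ≤ σj² - t²` for `0 ≤ t ≤ σj`.
-/

open Real

/-- Key optimization inequality for the best achievable risk of cascading collision in the
positive-correlation case: for `r > 0`, `0 < a ≤ b`, `κ ≥ r/b`, and `σᵢ, σⱼ ∈ [a, b]`,
`0 ≤ σᵢⱼ ≤ σᵢσⱼ`, one has
`r − rσᵢⱼ/σᵢ² − κ√(σⱼ² − σᵢⱼ²/σᵢ²) ≤ r(1 − a/b)`. -/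
theorem avar_positive_correlation_bound (r a b κ : ℝ)
    (hr : 0 < r) (ha : 0 < a) (hab : a ≤ b) (hκ : r / b ≤ κ)
    (σi σj σij : ℝ) (hσi : σi ∈ Set.Icc a b) (hσj : σj ∈ Set.Icc a b)
    (hij0 : 0 ≤ σij) (hij : σij ≤ σi * σj) :
    r - r * σij / σi ^ 2 - κ * Real.sqrt (σj ^ 2 - σij ^ 2 / σi ^ 2) ≤
      r * (1 - a / b) := by
  obtain ⟨hia, hib⟩ := hσi
  obtain ⟨hja, -⟩ := hσj
  have hi : 0 < σi := ha.trans_le hia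
  have hb : 0 < b := ha.trans_le hab
  obtain ⟨t, rfl⟩ : ∃ t, σij = σi * t := ⟨σij / σi, by field_simp⟩
  have ht0 : 0 ≤ t := nonneg_of_mul_nonneg_right hij0 hi
  have htj : t ≤ σj := le_of_mul_le_mul_left hij hi
  have e1 : r * (σi * t) / σi ^ 2 = r * t / σi := by field_simp
  have e2 : (σi * t) ^ 2 / σi ^ 2 = t ^ 2 := by field_simp
  rw [e1, e2]
  have hs : σj - t ≤ √(σj ^ 2 - t ^ 2) := Real.le_sqrt_of_sq_le (by nlinarith)
  have h1 : r * t / b ≤ r * t / σi := by gcongr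
  have h2 : r / b * √(σj ^ 2 - t ^ 2) ≤ κ * √(σj ^ 2 - t ^ 2) := by gcongr
  have h3 : r / b * a ≤ r / b * (t + √(σj ^ 2 - t ^ 2)) := by
    gcongr
    linarith
  have e3 : r * (1 - a / b) = r - r / b * a := by ring
  have e4 : r * t / b = r / b * t := by ring
  rw [e3]
  linarith
end
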